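/- For every pair of d×d positive semidefinite complex matrices A and B, the matrix Z_p := (A^{p/2} B^p A^{p/2})^{1/p} converges as p → ∞ to a positive semidefinite matrix. -/

import Mathlib

open Matrix Filter Topology Finset
open scoped ComplexOrder

/-- Functional-calculus power of a (Hermitian, in practice positive semidefinite)
matrix, with the convention `0 ^ r = 0` for `r > 0`. -/
noncomputable def psdPow {d : ℕ} (A : Matrix (Fin d) (Fin d) ℂ) (r : ℝ) :
    Matrix (Fin d) (Fin d) ℂ :=
  if hA : A.IsHermitian then
    (hA.eigenvectorUnitary : Matrix (Fin d) (Fin d) ℂ) *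
      Matrix.diagonal (fun i => ((hA.eigenvalues i ^ r : ℝ) : ℂ)) *
      star (hA.eigenvectorUnitary : Matrix (Fin d) (Fin d) ℂ)
  else 0

/-- The eigenvalues of a Hermitian matrix, sorted in decreasing order
(with multiplicities). -/
noncomputable def eigsDesc {d : ℕ} (A : Matrix (Fin d) (Fin d) ℂ) : Fin d → ℝ :=
  if hA : A.IsHermitian then
    fun i => hA.eigenvalues (Tuple.sort hA.eigenvalues i.rev)
  else 0

/-- `Zmat A B p = (A^{p/2} B^p A^{p/2})^{1/p}`. -/
noncomputable def Zmat {d : ℕ} (A B : Matrix (Fin d) (Fin d) ℂ) (p : ℝ) :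
    Matrix (Fin d) (Fin d) ℂ :=
  psdPow (psdPow A (p / 2) * psdPow B p * psdPow A (p / 2)) (1 / p)

/-!
Let `X p = A ^ (p / 2) * B ^ p * A ^ (p / 2)`. By the spectral theorem the entries of `X p` are
finite exponential sums `∑ a_c e ^ (c p)`. For fixed `s > 0`, Cramer's rule turns the entries of
`X p * (X p + s ^ p)⁻¹` into quotients of exponential sums; they are bounded because `X p ≥ 0`, and
a bounded quotient of exponential sums converges, because numerator and denominator are each
asymptotic to their dominant term. Finally `∫ s in (0, ∞), x / (x + s ^ p) = C p * x ^ (1 / p)` with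
`C p → 1`, so applying this to `X p` in the functional calculus and using dominated convergence in
`s` gives the convergence of `X p ^ (1 / p)`.
-/

open Asymptotics MeasureTheory

section ExponentialSums
variable {𝕜 : Type*} [RCLike 𝕜]

/-- Formal finite exponential sums `∑ a_c e ^ (c p)` in a variable `p`, with real frequencies `c`
and coefficients in `𝕜`, encoded as the group algebra of `ℝ`. -/
abbrev ExpSum (𝕜 : Type*) [RCLike 𝕜] : Type _ := AddMonoidAlgebra 𝕜 ℝ

namespace ExpSum

/-- The value `∑ a_c e ^ (c p)` of an exponential sum at `p`. -/
noncomputable def eval (p : ℝ) : ExpSum 𝕜 →ₐ[𝕜] 𝕜 :=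
  AddMonoidAlgebra.lift 𝕜 𝕜 ℝ
    { toFun := fun c => (Real.exp (c.toAdd * p) : 𝕜)
      map_one' := by simp
      map_mul' := fun a b => by simp [add_mul, Real.exp_add] }

theorem eval_apply (p : ℝ) (f : ExpSum 𝕜) :
    eval p f = ∑ c ∈ f.coeff.support, f.coeff c * (Real.exp (c * p) : 𝕜) :=
  AddMonoidAlgebra.lift_apply _ _

theorem eval_single (p c : ℝ) (a : 𝕜) :
    eval p (AddMonoidAlgebra.single c a) = a * (Real.exp (c * p) : 𝕜) :=
  AddMonoidAlgebra.lift_single _ _ _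

/-- The function `p ↦ r ^ p`, for `0 ≤ r`, as an exponential sum. For `r = 0` it is the zero sum,
which differs from `0 ^ p` at `p = 0`. -/
noncomputable def rpow (𝕜 : Type*) [RCLike 𝕜] (r : ℝ) : ExpSum 𝕜 :=
  if r = 0 then 0 else AddMonoidAlgebra.single (Real.log r) 1

theorem eval_rpow {r p : ℝ} (hr : 0 ≤ r) (hp : p ≠ 0) :
    eval p (rpow 𝕜 r) = ((r ^ p : ℝ) : 𝕜) := by
  obtain rfl | hr := hr.eq_or_lt
  · simp [rpow, Real.zero_rpow hp]
  · rw [rpow, if_neg hr.ne', eval_single, one_mul, Real.rpow_def_of_pos hr]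

theorem isLittleO_const_mul_exp {c e : ℝ} (h : c < e) (a : 𝕜) {b : 𝕜} (hb : b ≠ 0) :
    (fun p : ℝ => a * (Real.exp (c * p) : 𝕜)) =o[atTop]
      fun p : ℝ => b * (Real.exp (e * p) : 𝕜) := by
  refine (IsLittleO.const_mul_left ?_ a).const_mul_right hb
  refine IsLittleO.of_norm_norm ?_
  simp only [RCLike.norm_ofReal, Real.abs_exp, Real.isLittleO_exp_comp_exp_comp, ← sub_mul]
  exact tendsto_id.const_mul_atTop (sub_pos.2 h)

theorem exists_isEquivalent_eval {f : ExpSum 𝕜} (hf : f ≠ 0) :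
    ∃ (c : ℝ) (a : 𝕜), a ≠ 0 ∧
      (fun p => eval p f) ~[atTop] fun p => a * (Real.exp (c * p) : 𝕜) := by
  have hs : f.coeff.support.Nonempty :=
    Finsupp.support_nonempty_iff.2 (by simpa using hf)
  set c := f.coeff.support.max' hs
  have hc : c ∈ f.coeff.support := f.coeff.support.max'_mem hs
  have hfc : f.coeff c ≠ 0 := Finsupp.mem_support_iff.1 hc
  refine ⟨c, f.coeff c, hfc, ?_⟩
  simp only [eval_apply, ← Finset.add_sum_erase _ _ hc]
  refine IsEquivalent.refl.add_isLittleO (IsLittleO.fun_sum fun x hx => ?_)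
  exact isLittleO_const_mul_exp (f.coeff.support.lt_max'_of_mem_erase_max' hs hx) _ hfc

theorem exists_isBigO_eval (f : ExpSum 𝕜) :
    ∃ c : ℝ, (fun p => eval p f) =O[atTop] fun p => Real.exp (c * p) := by
  by_cases hf : f = 0
  · exact ⟨0, by simpa only [hf, map_zero] using isBigO_zero _ _⟩
  obtain ⟨c, a, -, h⟩ := exists_isEquivalent_eval hf
  exact ⟨c, h.isBigO.trans ((isBigO_of_le _ fun p => by simp).const_mul_left a)⟩

theorem exists_tendsto_const_mul_exp {c : ℝ} {k : 𝕜} (hk : k ≠ 0)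
    (h : (fun p : ℝ => k * (Real.exp (c * p) : 𝕜)) =O[atTop] fun _ => (1 : ℝ)) :
    ∃ l, Tendsto (fun p : ℝ => k * (Real.exp (c * p) : 𝕜)) atTop (𝓝 l) := by
  have hc : c ≤ 0 := by
    by_contra! hc
    have hexp : Tendsto (fun p : ℝ => ‖k * (Real.exp (c * p) : 𝕜)‖) atTop atTop := by
      simp only [norm_mul, RCLike.norm_ofReal, Real.abs_exp]
      exact (Real.tendsto_exp_atTop.comp (tendsto_id.const_mul_atTop hc)).const_mul_atTop
        (norm_pos_iff.2 hk)
    exact not_isBoundedUnder_of_tendsto_atTop hexp ((isBigO_one_iff ℝ).1 h)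
  obtain rfl | hc := hc.eq_or_lt
  · exact ⟨k, by simp⟩
  · refine ⟨0, (isLittleO_one_iff 𝕜).1 ?_⟩
    simpa using isLittleO_const_mul_exp hc k (one_ne_zero (α := 𝕜))

theorem exists_tendsto_eval_div {f g : ExpSum 𝕜}
    (h : (fun p => eval p f / eval p g) =O[atTop] fun _ => (1 : ℝ)) :
    ∃ l, Tendsto (fun p => eval p f / eval p g) atTop (𝓝 l) := by
  by_cases hf : f = 0
  · exact ⟨0, by simp [hf]⟩
  by_cases hg : g = 0
  · exact ⟨0, by simp [hg]⟩
  obtain ⟨c, a, ha, hfa⟩ := exists_isEquivalent_eval hf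
  obtain ⟨e, b, hb, hgb⟩ := exists_isEquivalent_eval hg
  have hdiv : (fun p => eval p f / eval p g) ~[atTop]
      fun p => a / b * (Real.exp ((c - e) * p) : 𝕜) := by
    refine (hfa.div hgb).congr_right (.of_forall fun p => ?_)
    simp only [Pi.div_apply, sub_mul, Real.exp_sub, RCLike.ofReal_div, mul_div_mul_comm]
  obtain ⟨l, hl⟩ := exists_tendsto_const_mul_exp (div_ne_zero ha hb) (hdiv.isBigO_symm.trans h)
  exact ⟨l, hdiv.symm.tendsto_nhds hl⟩

end ExpSum
end ExponentialSums

section RootKernel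

/-- A smoothed indicator of `s < x ^ (1 / p)`, chosen to be rational in `x`. Its integral over
`s > 0` is a multiple of `x ^ (1 / p)`. -/
noncomputable def rootKernel (p s x : ℝ) : ℝ :=
  x / (x + s ^ p)

/-- The constant `C p` in `∫ s in (0, ∞), x / (x + s ^ p) = C p * x ^ (1 / p)`. -/
noncomputable def rootConst (p : ℝ) : ℝ :=
  ∫ s in Set.Ioi 0, rootKernel p s 1

variable {p s x K : ℝ}

theorem rootKernel_nonneg (hs : 0 ≤ s) (hx : 0 ≤ x) : 0 ≤ rootKernel p s x := by
  unfold rootKernel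
  positivity

theorem rootKernel_le_one (hs : 0 < s) (hx : 0 ≤ x) : rootKernel p s x ≤ 1 :=
  div_le_one_of_le₀ (by linarith [Real.rpow_nonneg hs.le p]) (by positivity)

theorem continuousOn_rootKernel (p : ℝ) :
    ContinuousOn (Function.uncurry (rootKernel p)) (Set.Ioi 0 ×ˢ Set.Ici 0) := by
  unfold rootKernel Function.uncurry
  refine continuousOn_snd.div (continuousOn_snd.add ?_) ?_
  · exact continuousOn_fst.rpow_const fun y hy => .inl hy.1.ne'
  · exact fun y hy => (add_pos_of_nonneg_of_pos hy.2 (Real.rpow_pos_of_pos hy.1 p)).ne'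

theorem rootKernel_rpow_mul (hs : 0 ≤ s) (hK : 0 < K) :
    rootKernel p (K * s) (K ^ p) = rootKernel p s 1 := by
  have hKp : K ^ p ≠ 0 := (Real.rpow_pos_of_pos hK p).ne'
  rw [rootKernel, rootKernel, Real.mul_rpow hK.le hs, ← mul_one_add, div_mul_cancel_left₀ hKp,
    one_div]

theorem rootKernel_mono {y : ℝ} (hs : 0 < s) (hx : 0 ≤ x) (hxy : x ≤ y) :
    rootKernel p s x ≤ rootKernel p s y := by
  have hsp := Real.rpow_pos_of_pos hs p
  rw [rootKernel, rootKernel, div_le_div_iff₀ (by positivity) (by linarith)]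
  nlinarith

theorem rootKernel_one_le (hs : 0 ≤ s) (hp : 2 ≤ p) :
    rootKernel p s 1 ≤ 2 * (1 + s ^ 2)⁻¹ := by
  have hsq : s ^ 2 ≤ 1 + s ^ p := by
    obtain h | h := le_total s 1
    · linarith [pow_le_one₀ (n := 2) hs h, Real.rpow_nonneg hs p]
    · have := Real.rpow_le_rpow_of_exponent_le h hp
      rw [Real.rpow_two] at this
      linarith
  have hsp := Real.rpow_nonneg hs p
  rw [rootKernel, ← div_eq_mul_inv, div_le_div_iff₀ (by positivity) (by positivity)]
  linarith

theorem rootKernel_le (hK : 0 < K) (hs : 0 < s) (hx : 0 ≤ x) (hxK : x ≤ K ^ p) (hp : 2 ≤ p) :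
    rootKernel p s x ≤ 2 * (1 + (s / K) ^ 2)⁻¹ :=
  calc
    rootKernel p s x ≤ rootKernel p s (K ^ p) := rootKernel_mono hs hx hxK
    _ = rootKernel p (s / K) 1 := by
      rw [← rootKernel_rpow_mul (by positivity) hK, mul_div_cancel₀ _ hK.ne']
    _ ≤ 2 * (1 + (s / K) ^ 2)⁻¹ := rootKernel_one_le (by positivity) hp

theorem integrable_two_mul_inv_one_add_div_sq (hK : K ≠ 0) :
    Integrable fun s : ℝ => 2 * (1 + (s / K) ^ 2)⁻¹ :=
  (integrable_inv_one_add_sq.comp_div hK).const_mul 2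

theorem integral_rootKernel (hx : 0 ≤ x) (hp : 0 < p) :
    ∫ s in Set.Ioi 0, rootKernel p s x = rootConst p * x ^ (1 / p) := by
  obtain rfl | hx := hx.eq_or_lt
  · simp [rootKernel, hp.ne']
  set z := x ^ (1 / p)
  have hz : 0 < z := Real.rpow_pos_of_pos hx _
  have hzp : z ^ p = x := by rw [← Real.rpow_mul hx.le, one_div_mul_cancel hp.ne', Real.rpow_one]
  have hsubst := integral_comp_mul_left_Ioi (rootKernel p · x) 0 hz
  rw [mul_zero, smul_eq_mul, eq_inv_mul_iff_mul_eq₀ hz.ne'] at hsubst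
  rw [← hsubst, mul_comm, rootConst]
  congr 1
  refine setIntegral_congr_fun measurableSet_Ioi fun s hs => ?_
  simp only [← hzp, rootKernel_rpow_mul (le_of_lt hs) hz]

theorem tendsto_rootKernel_one (hs : 0 < s) (hs1 : s ≠ 1) :
    Tendsto (rootKernel · s 1) atTop (𝓝 (Set.indicator (Set.Iio 1) 1 s)) := by
  unfold rootKernel
  obtain h | h := hs1.lt_or_gt
  · have := tendsto_rpow_atTop_of_base_lt_one s (by linarith) h
    simpa [h] using (this.const_add 1).inv₀ (by norm_num)
  · have := tendsto_rpow_atTop_of_base_gt_one s h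
    simpa [h.not_gt, Function.comp_def] using
      tendsto_inv_atTop_zero.comp (tendsto_atTop_add_const_left _ 1 this)

theorem tendsto_rootConst : Tendsto rootConst atTop (𝓝 1) := by
  have hone : ∫ s in Set.Ioi (0 : ℝ), Set.indicator (Set.Iio 1) 1 s = (1 : ℝ) := by
    simp [setIntegral_indicator, Set.Ioi_inter_Iio]
  rw [← hone]
  refine tendsto_integral_filter_of_dominated_convergence (fun s => 2 * (1 + (s / 1) ^ 2)⁻¹)
    (.of_forall fun p => ?_) ?_
    (integrable_two_mul_inv_one_add_div_sq one_ne_zero).integrableOn ?_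
  · exact ((continuousOn_rootKernel p).uncurry_right 1 (by simp)).aestronglyMeasurable
      measurableSet_Ioi
  · filter_upwards [eventually_ge_atTop 2] with p hp
    filter_upwards [ae_restrict_mem measurableSet_Ioi] with s hs
    rw [Real.norm_of_nonneg (rootKernel_nonneg (le_of_lt hs) zero_le_one)]
    exact rootKernel_le one_pos hs zero_le_one (by simp) hp
  · filter_upwards [ae_restrict_mem measurableSet_Ioi,
      ae_restrict_of_ae (Measure.ae_ne volume 1)] with s hs hs1
    exact tendsto_rootKernel_one hs hs1

end RootKernel

section CStarAlgebra

theorem exists_pos_le_rpow {p : ℝ} (hp : p ≠ 0) (x : ℝ) : ∃ K > 0, x ≤ K ^ p :=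
  ⟨(|x| + 1) ^ p⁻¹, by positivity, by
    rw [Real.rpow_inv_rpow (by positivity) hp]; linarith [le_abs_self x]⟩

theorem exists_eventually_norm_le_rpow {E : Type*} [NormedAddCommGroup E] {f : ℝ → E} {c : ℝ}
    (hf : f =O[atTop] fun p => Real.exp (c * p)) : ∃ K > 0, ∀ᶠ p in atTop, ‖f p‖ ≤ K ^ p := by
  refine ⟨Real.exp (c + 1), Real.exp_pos _, ?_⟩
  have hexp : (fun p => Real.exp (c * p)) =o[atTop] fun p => Real.exp (c + 1) ^ p := by
    simp only [← Real.exp_mul, Real.isLittleO_exp_comp_exp_comp]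
    exact tendsto_id.congr fun p => by simp only [id]; ring
  filter_upwards [(hf.trans_isLittleO hexp).bound one_pos] with p hp
  simpa [abs_of_pos (Real.rpow_pos_of_pos (Real.exp_pos (c + 1)) p)] using hp

variable {A : Type*} [CStarAlgebra A] [PartialOrder A] [StarOrderedRing A]
  {a : A} {p : ℝ}

theorem norm_rootKernel_le_of_mem_spectrum {s x K : ℝ} (ha : 0 ≤ a) (hK : 0 < K)
    (haK : ‖a‖ ≤ K ^ p) (hs : 0 < s) (hp : 2 ≤ p) (hx : x ∈ spectrum ℝ a) :
    ‖rootKernel p s x‖ ≤ 2 * (1 + (s / K) ^ 2)⁻¹ := by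
  have hx0 : 0 ≤ x := spectrum_nonneg_of_nonneg ha hx
  have hxa : x ≤ ‖a‖ := by
    simpa [cfc_id ℝ a, abs_of_nonneg hx0] using norm_apply_le_norm_cfc id a hx
  rw [Real.norm_of_nonneg (rootKernel_nonneg hs.le hx0)]
  exact rootKernel_le hK hs hx0 (hxa.trans haK) hp

theorem continuousOn_rootKernel_spectrum (ha : 0 ≤ a) (p : ℝ) :
    ContinuousOn (Function.uncurry (rootKernel p)) (Set.Ioi 0 ×ˢ spectrum ℝ a) :=
  (continuousOn_rootKernel p).mono <|
    Set.prod_mono_right fun _ hx => spectrum_nonneg_of_nonneg ha hx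

theorem integrableOn_cfc_rootKernel (ha : 0 ≤ a) (hp : 2 ≤ p) :
    IntegrableOn (fun s => cfc (rootKernel p s) a) (Set.Ioi 0) := by
  obtain ⟨K, hK, haK⟩ := exists_pos_le_rpow (by linarith : p ≠ 0) ‖a‖
  refine integrableOn_cfc measurableSet_Ioi _ _ a (continuousOn_rootKernel_spectrum ha p) ?_
    (integrable_two_mul_inv_one_add_div_sq hK.ne').integrableOn.hasFiniteIntegral
  filter_upwards [ae_restrict_mem measurableSet_Ioi] with s hs x hx
  exact norm_rootKernel_le_of_mem_spectrum ha hK haK hs hp hx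

theorem setIntegral_cfc_rootKernel (ha : 0 ≤ a) (hp : 2 ≤ p) :
    ∫ s in Set.Ioi 0, cfc (rootKernel p s) a = rootConst p • a ^ (1 / p) := by
  obtain ⟨K, hK, haK⟩ := exists_pos_le_rpow (by linarith : p ≠ 0) ‖a‖
  have hbound : ∀ᵐ s ∂volume.restrict (Set.Ioi 0), ∀ x ∈ spectrum ℝ a,
      ‖rootKernel p s x‖ ≤ 2 * (1 + (s / K) ^ 2)⁻¹ := by
    filter_upwards [ae_restrict_mem measurableSet_Ioi] with s hs x hx
    exact norm_rootKernel_le_of_mem_spectrum ha hK haK hs hp hx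
  rw [← cfc_setIntegral measurableSet_Ioi _ _ a (continuousOn_rootKernel_spectrum ha p) hbound
    (integrable_two_mul_inv_one_add_div_sq hK.ne').integrableOn.hasFiniteIntegral,
    CFC.rpow_eq_cfc_real,
    ← cfc_smul _ _ _ ((Real.continuous_rpow_const (by positivity)).continuousOn)]
  exact cfc_congr fun x hx => integral_rootKernel (spectrum_nonneg_of_nonneg ha hx) (by linarith)

theorem exists_tendsto_rpow_one_div {a : ℝ → A} {c : ℝ} (ha : ∀ p, 0 ≤ a p)
    (hexp : a =O[atTop] fun p => Real.exp (c * p))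
    (hlim : ∀ s > 0, ∃ l, Tendsto (fun p => cfc (rootKernel p s) (a p)) atTop (𝓝 l)) :
    ∃ z, Tendsto (fun p => a p ^ (1 / p)) atTop (𝓝 z) := by
  obtain ⟨K, hK, haK⟩ := exists_eventually_norm_le_rpow hexp
  choose! L hL using hlim
  have hint : Tendsto (fun p => ∫ s in Set.Ioi 0, cfc (rootKernel p s) (a p)) atTop
      (𝓝 (∫ s in Set.Ioi 0, L s)) := by
    refine tendsto_integral_filter_of_dominated_convergence (fun s => 2 * (1 + (s / K) ^ 2)⁻¹)
      ?_ ?_ (integrable_two_mul_inv_one_add_div_sq hK.ne').integrableOn ?_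
    · filter_upwards [eventually_ge_atTop 2] with p hp
      exact (integrableOn_cfc_rootKernel (ha p) hp).aestronglyMeasurable
    · filter_upwards [haK, eventually_ge_atTop 2] with p hpK hp
      filter_upwards [ae_restrict_mem measurableSet_Ioi] with s hs
      exact norm_cfc_le (by positivity) fun x =>
        norm_rootKernel_le_of_mem_spectrum (ha p) hK hpK hs hp
    · filter_upwards [ae_restrict_mem measurableSet_Ioi] with s hs using hL s hs
  refine ⟨_, ((tendsto_rootConst.inv₀ one_ne_zero).smul hint).congr' ?_⟩
  filter_upwards [eventually_ge_atTop 2, tendsto_rootConst.eventually_ne one_ne_zero] with p hp hc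
  rw [setIntegral_cfc_rootKernel (ha p) hp, inv_smul_smul₀ hc]

end CStarAlgebra

section Matrix
open scoped MatrixOrder Matrix.Norms.L2Operator

variable {𝕜 n : Type*} [RCLike 𝕜] [Fintype n] [DecidableEq n]

theorem isBigO_of_forall_entry {α : Type*} {l : Filter α} {F : α → Matrix n n 𝕜} {g : α → ℝ}
    (h : ∀ i j, (fun p => F p i j) =O[l] g) : F =O[l] g := by
  have hsum : F = fun p => ∑ i, ∑ j, Matrix.single i j (F p i j) :=
    funext fun p => matrix_eq_sum_single (F p)
  rw [hsum]
  refine IsBigO.fun_sum fun i _ => IsBigO.fun_sum fun j _ => IsBigO.trans ?_ (h i j)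
  exact (singleLinearMap 𝕜 i j).toContinuousLinearMap.isBigO_comp (fun p => F p i j) l

theorem isBigO_entry {α : Type*} {l : Filter α} (F : α → Matrix n n 𝕜) (i j : n) :
    (fun p => F p i j) =O[l] F :=
  (entryLinearMap 𝕜 𝕜 i j : Matrix n n 𝕜 →ₗ[𝕜] 𝕜).toContinuousLinearMap.isBigO_comp F l

theorem exists_isBigO_map_eval (M : Matrix n n (ExpSum 𝕜)) :
    ∃ c, (fun p => M.map (ExpSum.eval p)) =O[atTop] fun p => Real.exp (c * p) := by
  choose c hc using fun i j => ExpSum.exists_isBigO_eval (M i j)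
  obtain ⟨C, hC⟩ := (Set.finite_range (Function.uncurry c)).bddAbove
  refine ⟨C, isBigO_of_forall_entry fun i j => (hc i j).trans (IsBigO.of_bound' ?_)⟩
  filter_upwards [eventually_ge_atTop 0] with p hp
  simp only [Real.norm_eq_abs, Real.abs_exp]
  gcongr
  exact hC ⟨(i, j), rfl⟩

theorem exists_map_eval_eq_cfc_rpow {A : Matrix n n 𝕜} {f : ℝ → ℝ} (hA : A.IsHermitian)
    (hf : ∀ x ∈ spectrum ℝ A, 0 ≤ f x) :
    ∃ M : Matrix n n (ExpSum 𝕜), ∀ p > 0, M.map (ExpSum.eval p) = cfc (fun x => f x ^ p) A := by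
  let U : Matrix n n 𝕜 := hA.eigenvectorUnitary
  refine ⟨U.map (algebraMap 𝕜 (ExpSum 𝕜)) *
    diagonal (fun i => ExpSum.rpow 𝕜 (f (hA.eigenvalues i))) *
    (star U).map (algebraMap 𝕜 (ExpSum 𝕜)), fun p hp => ?_⟩
  have hconst (N : Matrix n n 𝕜) : (N.map (algebraMap 𝕜 (ExpSum 𝕜))).map (ExpSum.eval p) = N := by
    ext i j
    exact (ExpSum.eval p).commutes _
  have heval (i : n) : ExpSum.eval p (ExpSum.rpow 𝕜 (f (hA.eigenvalues i))) =
      ((f (hA.eigenvalues i) ^ p : ℝ) : 𝕜) :=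
    ExpSum.eval_rpow (hf _ (hA.eigenvalues_mem_spectrum_real i)) hp.ne'
  rw [hA.cfc_eq, Matrix.map_mul, Matrix.map_mul, hconst, hconst, diagonal_map (map_zero _)]
  simp only [heval]
  rfl

theorem cfc_div_add_eq_mul_inv {A : Matrix n n 𝕜} (hA : A.PosSemidef) {t : ℝ} (ht : 0 < t) :
    cfc (fun x : ℝ => x / (x + t)) A = A * (A + (t : 𝕜) • (1 : Matrix n n 𝕜))⁻¹ := by
  have hne : ∀ x ∈ spectrum ℝ A, x + t ≠ 0 := fun x hx =>
    (add_pos_of_nonneg_of_pos (spectrum_nonneg_of_nonneg hA.nonneg hx) ht).ne'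
  have hcont (f : ℝ → ℝ) : ContinuousOn f (spectrum ℝ A) := A.finite_real_spectrum.continuousOn f
  have hsa : IsSelfAdjoint A := hA.1
  simp only [div_eq_mul_inv]
  rw [cfc_mul _ _ A (hcont _) (hcont _), cfc_inv _ A hne (hcont _), cfc_add_const t _ A (hcont _),
    cfc_id' ℝ A, nonsing_inv_eq_ringInverse, Algebra.algebraMap_eq_smul_one,
    RCLike.real_smul_eq_coe_smul (K := 𝕜)]

theorem mul_inv_map_eval_apply (N T : Matrix n n (ExpSum 𝕜)) (p : ℝ) (i j : n) :
    (N.map (ExpSum.eval p) * (T.map (ExpSum.eval p))⁻¹) i j =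
      ExpSum.eval p ((N * T.adjugate) i j) / ExpSum.eval p T.det := by
  have hmul : ExpSum.eval p ((N * T.adjugate) i j) =
      (N.map (ExpSum.eval p) * T.adjugate.map (ExpSum.eval p)) i j := by
    rw [← Matrix.map_mul, map_apply]
  have hadj : T.adjugate.map (ExpSum.eval p) = (T.map (ExpSum.eval p)).adjugate :=
    AlgHom.map_adjugate _ _
  have hdet : ExpSum.eval p T.det = (T.map (ExpSum.eval p)).det := AlgHom.map_det _ _
  rw [hmul, hadj, hdet, Matrix.inv_def, mul_smul_comm, Matrix.smul_apply, Ring.inverse_eq_inv',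
    smul_eq_mul, div_eq_inv_mul]

variable {X : ℝ → Matrix n n ℂ} {M : Matrix n n (ExpSum ℂ)}

theorem exists_tendsto_cfc_rootKernel (hX : ∀ p, (X p).PosSemidef)
    (hM : ∀ p > 0, M.map (ExpSum.eval p) = X p) {s : ℝ} (hs : 0 < s) :
    ∃ l, Tendsto (fun p => cfc (rootKernel p s) (X p)) atTop (𝓝 l) := by
  set T := M + ExpSum.rpow ℂ s • (1 : Matrix n n (ExpSum ℂ))
  have hT : ∀ p > 0, T.map (ExpSum.eval p) = X p + ((s ^ p : ℝ) : ℂ) • (1 : Matrix n n ℂ) := by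
    intro p hp
    ext i j
    simp [T, ← hM p hp, ExpSum.eval_rpow hs.le hp.ne', one_apply, apply_ite (ExpSum.eval p)]
  have hentry (i j : n) : (fun p => ExpSum.eval p ((M * T.adjugate) i j) / ExpSum.eval p T.det)
      =ᶠ[atTop] fun p => cfc (rootKernel p s) (X p) i j := by
    filter_upwards [eventually_gt_atTop 0] with p hp
    have hcfc : cfc (rootKernel p s) (X p) = _ :=
      cfc_div_add_eq_mul_inv (hX p) (Real.rpow_pos_of_pos hs p)
    rw [← mul_inv_map_eval_apply, hM p hp, hT p hp, hcfc]
    rfl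
  have hbdd : (fun p => cfc (rootKernel p s) (X p)) =O[atTop] fun _ => (1 : ℝ) := by
    refine IsBigO.of_norm_le fun p => norm_cfc_le zero_le_one fun x hx => ?_
    have hx0 := spectrum_nonneg_of_nonneg (hX p).nonneg hx
    rw [Real.norm_of_nonneg (rootKernel_nonneg hs.le hx0)]
    exact rootKernel_le_one hs hx0
  choose l hl using fun i j => ExpSum.exists_tendsto_eval_div
    ((hentry i j).trans_isBigO ((isBigO_entry _ i j).trans hbdd))
  exact ⟨of l, tendsto_pi_nhds.2 fun i => tendsto_pi_nhds.2 fun j => (hl i j).congr' (hentry i j)⟩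

theorem exists_tendsto_rpow_one_div_of_map_eval (hX : ∀ p, (X p).PosSemidef)
    (hM : ∀ p > 0, M.map (ExpSum.eval p) = X p) :
    ∃ Z, Tendsto (fun p => X p ^ (1 / p)) atTop (𝓝 Z) := by
  obtain ⟨c, hc⟩ := exists_isBigO_map_eval M
  refine exists_tendsto_rpow_one_div (fun p => (hX p).nonneg) (hc.congr' ?_ .rfl) fun s hs =>
    exists_tendsto_cfc_rootKernel hX hM hs
  filter_upwards [eventually_gt_atTop 0] with p hp using hM p hp

theorem posSemidef_of_tendsto {m α : Type*} [Finite m] {l : Filter α} [l.NeBot]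
    {F : α → Matrix m m ℂ} {Z : Matrix m m ℂ} (hF : ∀ p, (F p).PosSemidef)
    (h : Tendsto F l (𝓝 Z)) : Z.PosSemidef := by
  classical
  have := Fintype.ofFinite m
  exact nonneg_iff_posSemidef.1 (ge_of_tendsto' h fun p => (hF p).nonneg)

end Matrix

section PsdPow
open scoped MatrixOrder Matrix.Norms.L2Operator

variable {d : ℕ} {A : Matrix (Fin d) (Fin d) ℂ}

theorem psdPow_eq_cfc (hA : A.IsHermitian) (r : ℝ) : psdPow A r = cfc (fun x : ℝ => x ^ r) A := by
  rw [hA.cfc_eq, psdPow, dif_pos hA]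
  rfl

theorem psdPow_eq_rpow (hA : A.PosSemidef) (r : ℝ) : psdPow A r = A ^ r := by
  rw [psdPow_eq_cfc hA.1, CFC.rpow_eq_cfc_real hA.nonneg]

theorem posSemidef_psdPow (hA : A.PosSemidef) (r : ℝ) : (psdPow A r).PosSemidef := by
  rw [psdPow_eq_rpow hA]
  exact nonneg_iff_posSemidef.1 CFC.rpow_nonneg

theorem posSemidef_psdPow_mul_mul (hA : A.PosSemidef) {B : Matrix (Fin d) (Fin d) ℂ}
    (hB : B.PosSemidef) (r s : ℝ) : (psdPow A r * psdPow B s * psdPow A r).PosSemidef := by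
  simpa only [(posSemidef_psdPow hA r).1.eq] using
    (posSemidef_psdPow hB s).mul_mul_conjTranspose_same (psdPow A r)

theorem exists_map_eval_eq_psdPow_mul (hA : A.PosSemidef) (r : ℝ) :
    ∃ M : Matrix (Fin d) (Fin d) (ExpSum ℂ), ∀ p > 0,
      M.map (ExpSum.eval p) = psdPow A (r * p) := by
  have hspec : ∀ x ∈ spectrum ℝ A, 0 ≤ x := fun x hx => spectrum_nonneg_of_nonneg hA.nonneg hx
  obtain ⟨M, hM⟩ := exists_map_eval_eq_cfc_rpow hA.1 fun x hx => Real.rpow_nonneg (hspec x hx) r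
  refine ⟨M, fun p hp => ?_⟩
  rw [hM p hp, psdPow_eq_cfc hA.1]
  exact cfc_congr fun x hx => (Real.rpow_mul (hspec x hx) r p).symm

theorem exists_tendsto_psdPow_one_div {X : ℝ → Matrix (Fin d) (Fin d) ℂ}
    {M : Matrix (Fin d) (Fin d) (ExpSum ℂ)} (hX : ∀ p, (X p).PosSemidef)
    (hM : ∀ p > 0, M.map (ExpSum.eval p) = X p) :
    ∃ Z, Tendsto (fun p => psdPow (X p) (1 / p)) atTop (𝓝 Z) := by
  simpa only [psdPow_eq_rpow (hX _)] using exists_tendsto_rpow_one_div_of_map_eval hX hM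

end PsdPow

/-- Anti Lie-Trotter formula, existence: for positive semidefinite `A, B`, the matrix
`Z_p = (A^{p/2} B^p A^{p/2})^{1/p}` converges as `p → ∞` to a positive semidefinite
matrix. -/
theorem anti_lie_trotter_limit_exists
    {d : ℕ} (A B : Matrix (Fin d) (Fin d) ℂ)
    (hA : A.PosSemidef) (hB : B.PosSemidef) :
    ∃ Z : Matrix (Fin d) (Fin d) ℂ, Z.PosSemidef ∧
      Tendsto (fun p : ℝ => Zmat A B p) atTop (𝓝 Z) := by
  have hX (p : ℝ) : (psdPow A (p / 2) * psdPow B p * psdPow A (p / 2)).PosSemidef :=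
    posSemidef_psdPow_mul_mul hA hB (p / 2) p
  obtain ⟨MA, hMA⟩ := exists_map_eval_eq_psdPow_mul hA 2⁻¹
  obtain ⟨MB, hMB⟩ := exists_map_eval_eq_psdPow_mul hB 1
  have hM (p : ℝ) (hp : 0 < p) : (MA * MB * MA).map (ExpSum.eval p) =
      psdPow A (p / 2) * psdPow B p * psdPow A (p / 2) := by
    simp only [Matrix.map_mul, hMA p hp, hMB p hp, one_mul, inv_mul_eq_div]
  obtain ⟨Z, hZ⟩ := exists_tendsto_psdPow_one_div hX hM
  exact ⟨Z, posSemidef_of_tendsto (fun p => posSemidef_psdPow (hX p) (1 / p)) hZ, hZ⟩
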